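/- The full blur shift Σ, with the topology generated by the generalized cylinders, is a regular topological space: every closed set C ⊆ Σ and every point y ∉ C can be separated by disjoint open sets. -/

import Mathlib

open Set Filter Topology

namespace BlurPaper

/-- The extended alphabet `Ā = A ⊕ V`, where each blurred set `H ∈ V` is regarded
as a new symbol `H̃`. -/
abbrev Symb (A : Type*) (V : Set (Set A)) := A ⊕ {H : Set A // H ∈ V}

/-- `V` is a family of blurred sets: every member is infinite and two distinct members
have finite intersection. -/
def IsBlurFamily {A : Type*} (V : Set (Set A)) : Prop :=
  (∀ H ∈ V, H.Infinite) ∧ ∀ G ∈ V, ∀ H ∈ V, G ≠ H → (G ∩ H).Finite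

/-- The full blur shift `Σ`: sequences over `Ā` such that a blur symbol is followed
by the same blur symbol. -/
def FullBlur (A : Type*) (V : Set (Set A)) : Set (ℕ → Symb A V) :=
  {x | ∀ (i : ℕ) (H : {H : Set A // H ∈ V}), x i = Sum.inr H → x (i + 1) = Sum.inr H}

/-- Generalized cylinder `Z(α)`. -/
def Z (A : Type*) (V : Set (Set A)) (α : List A) : Set (FullBlur A V) :=
  {x | ∀ i : Fin α.length, x.1 i = Sum.inl (α.get i)}

/-- Generalized cylinder `Z(α, H, F)`. -/
def ZH (A : Type*) (V : Set (Set A)) (α : List A) (H : {H : Set A // H ∈ V})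
    (F : Set A) : Set (FullBlur A V) :=
  {x | (∀ i : Fin α.length, x.1 i = Sum.inl (α.get i)) ∧
    (x.1 α.length = Sum.inr H ∨ ∃ a ∈ H.1 \ F, x.1 α.length = Sum.inl a)}

/-- The collection of all generalized cylinders. -/
def Cylinders (A : Type*) (V : Set (Set A)) : Set (Set (FullBlur A V)) :=
  {U | ∃ α : List A, U = Z A V α} ∪
  {U | ∃ (α : List A) (H : {H : Set A // H ∈ V}) (F : Set A),
    F ⊆ H.1 ∧ F.Finite ∧ U = ZH A V α H F}

/-- The topology on the full blur shift generated by the generalized cylinders. -/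
def tau (A : Type*) (V : Set (Set A)) : TopologicalSpace (FullBlur A V) :=
  TopologicalSpace.generateFrom (Cylinders A V)

/-- The shift map on the full blur shift. -/
def shift (A : Type*) (V : Set (Set A)) : FullBlur A V → FullBlur A V :=
  fun x => ⟨fun i => x.1 (i + 1), fun i H h => x.2 (i + 1) H h⟩

/-- The shift map on `A^ℕ`. -/
def shiftSeq (A : Type*) : (ℕ → A) → ℕ → A := fun x i => x (i + 1)

/-- The prodiscrete topology on `A^ℕ` (product of discrete topologies). -/
def prodDiscrete (A : Type*) : TopologicalSpace (ℕ → A) :=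
  @Pi.topologicalSpace ℕ (fun _ => A) fun _ => ⊥

/-- A (classical) shift space over `A`: closed in the prodiscrete topology and
invariant under the shift map. -/
def IsShiftSpace {A : Type*} (Λ : Set (ℕ → A)) : Prop :=
  @IsClosed _ (prodDiscrete A) Λ ∧ ∀ x ∈ Λ, shiftSeq A x ∈ Λ

/-- `w ∈ B(Y)`: the finite word `w` appears as an initial word of some element of `Y`. -/
def InLang {A : Type*} (Y : Set (ℕ → A)) (w : List A) : Prop :=
  ∃ x ∈ Y, ∀ i : Fin w.length, x i = w.get i

/-- The follower set `F_Y(w) = {a : w a ∈ B(Y)}`. -/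
def Fol {A : Type*} (Y : Set (ℕ → A)) (w : List A) : Set A :=
  {a | InLang Y (w ++ [a])}

/-- The predecessor set `P_Y(a) = {b : b a ∈ B(Y)}`. -/
def Pred {A : Type*} (Y : Set (ℕ → A)) (a : A) : Set A :=
  {b | InLang Y [b, a]}

/-- `B₁(Y)`: the set of letters occurring in sequences of `Y`. -/
def letters {A : Type*} (Y : Set (ℕ → A)) : Set A :=
  {a | ∃ x ∈ Y, ∃ i, x i = a}

/-- The canonical embedding `A^ℕ → Σ`. -/
def embed (A : Type*) (V : Set (Set A)) : (ℕ → A) → FullBlur A V :=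
  fun x => ⟨fun i => Sum.inl (x i), fun _ _ h => absurd h (by simp)⟩

/-- The point `(a₀ … a_{n-1} H̃ H̃ H̃ …)` of the full blur shift. -/
def wordBlur {A : Type*} {V : Set (Set A)} (α : List A) (H : {H : Set A // H ∈ V}) :
    FullBlur A V :=
  ⟨fun i => if h : i < α.length then Sum.inl (α.get ⟨i, h⟩) else Sum.inr H, by
    intro i K hK
    by_cases h : i < α.length
    · simp only [dif_pos h] at hK
      exact absurd hK (by simp)
    · simp only [dif_neg h] at hK
      simp only [dif_neg (by omega : ¬ i + 1 < α.length)]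
      exact hK⟩

/-- The boundary `∂Y`: points `(a₀ … a_{n-1} H̃ H̃ …)` with `a₀ … a_{n-1} ∈ B(Y)` and
`F_Y(a₀ … a_{n-1}) ∩ H` infinite. -/
def boundary (A : Type*) (V : Set (Set A)) (Y : Set (ℕ → A)) : Set (FullBlur A V) :=
  {z | ∃ (α : List A) (H : {H : Set A // H ∈ V}),
    z = wordBlur α H ∧ InLang Y α ∧ (Fol Y α ∩ H.1).Infinite}

/-- The blur shift space `Σ_Y = Y ∪ ∂Y` of `Y` with resolution `V`. -/
def SigmaOf (A : Type*) (V : Set (Set A)) (Y : Set (ℕ → A)) : Set (FullBlur A V) :=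
  embed A V '' Y ∪ boundary A V Y

/-- The subspace topology inherited from the full blur shift. -/
def subTau (A : Type*) (V : Set (Set A)) (X : Set (FullBlur A V)) :
    TopologicalSpace X :=
  TopologicalSpace.induced Subtype.val (tau A V)

/-- `V_Λ`: the blurred sets that appear in `Σ_Λ`, i.e. those meeting `B₁(Λ)` in an
infinite set. -/
def VLam (A : Type*) (V : Set (Set A)) (Λ : Set (ℕ → A)) : Set (Set A) :=
  {H | H ∈ V ∧ (letters Λ ∩ H).Infinite}

/-!
Give the alphabet `Ā` the topology in which letters are isolated and the sets `{H̃} ∪ (H ∖ F)`,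
`F` finite, are the basic neighbourhoods of `H̃`. Since distinct blurred sets meet in finitely many
letters, these sets are clopen, as are the singletons of letters. On the cylinder `Z(α)` the symbol
following `α` depends continuously on the point, so every generalized cylinder is clopen, by
induction on the length of the word; and a topology generated by clopen sets is regular.
-/

theorem regularSpace_of_generateFrom_isClopen {X : Type*} [t : TopologicalSpace X]
    {S : Set (Set X)} (ht : t = TopologicalSpace.generateFrom S) (hS : ∀ s ∈ S, IsClopen s) :
    RegularSpace X :=
  (regularSpace_generateFrom ht).2 fun s hs _ hx =>
    Filter.disjoint_iff.2 ⟨sᶜ, (hS s hs).compl.isOpen.mem_nhdsSet_self,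
      s, (hS s hs).isOpen.mem_nhds hx, disjoint_compl_left⟩

/-- The topology on the extended alphabet `Ā` in which letters are isolated and a neighbourhood
of `H̃` is a set that contains `H̃` and all but finitely many letters of `H`. -/
@[reducible]
def symbTopology (A : Type*) (V : Set (Set A)) : TopologicalSpace (Symb A V) where
  IsOpen T := ∀ H : {H : Set A // H ∈ V}, Sum.inr H ∈ T → (H.1 \ Sum.inl ⁻¹' T).Finite
  isOpen_univ := by simp
  isOpen_inter S T hS hT H hH := by
    rw [preimage_inter, sdiff_inter]
    exact (hS H hH.1).union (hT H hH.2)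
  isOpen_sUnion 𝒯 h𝒯 := by
    rintro H ⟨T, hT, hH⟩
    exact (h𝒯 T hT H hH).subset
      (sdiff_subset_sdiff_right (preimage_mono (subset_sUnion_of_mem hT)))

/-- The set of symbols `{H̃} ∪ (H ∖ F)`, a basic neighbourhood of `H̃` in `Ā` when `F` is finite. -/
def blurNhd {A : Type*} {V : Set (Set A)} (H : {H : Set A // H ∈ V}) (F : Set A) :
    Set (Symb A V) :=
  {s | s = Sum.inr H ∨ ∃ a ∈ H.1 \ F, s = Sum.inl a}

section

attribute [local instance] symbTopology

variable {A : Type*} {V : Set (Set A)}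

local instance : TopologicalSpace (FullBlur A V) := tau A V

theorem isClopen_singleton_inl (a : A) : IsClopen ({Sum.inl a} : Set (Symb A V)) := by
  refine ⟨⟨fun H _ => (finite_singleton a).subset ?_⟩, fun H hH => by simp at hH⟩
  rintro b ⟨-, hb⟩
  simpa using hb

theorem isOpen_blurNhd (H : {H : Set A // H ∈ V}) {F : Set A} (hF : F.Finite) :
    IsOpen (blurNhd H F) := by
  rintro G (hG | ⟨a, -, ha⟩)
  · obtain rfl := Sum.inr.inj hG
    refine hF.subset fun a ⟨haG, ha⟩ => ?_
    by_contra haF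
    exact ha (Or.inr ⟨a, ⟨haG, haF⟩, rfl⟩)
  · cases ha

theorem isClosed_blurNhd (hV : V.Pairwise fun G H => (G ∩ H).Finite)
    (H : {H : Set A // H ∈ V}) (F : Set A) : IsClosed (blurNhd H F) := by
  refine ⟨fun G hG => ?_⟩
  have hne : G.1 ≠ H.1 := fun h => hG (Or.inl (congrArg Sum.inr (Subtype.ext h)))
  refine (hV G.2 H.2 hne).subset fun a ⟨haG, ha⟩ => ⟨haG, ?_⟩
  obtain h | ⟨b, hb, h⟩ := not_not.1 ha
  · cases h
  · exact Sum.inl.inj h ▸ hb.1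

theorem Z_append_singleton (α : List A) (a : A) :
    Z A V (α ++ [a]) = Z A V α ∩ (fun x => x.1 α.length) ⁻¹' {Sum.inl a} := by
  ext x
  simp only [Z, mem_inter_iff, mem_ofPred_eq, mem_preimage, mem_singleton_iff, Fin.forall_iff,
    List.length_append, List.length_singleton, List.get_eq_getElem]
  constructor
  · intro h
    refine ⟨fun i hi => ?_, by simpa only [List.getElem_concat_length] using h α.length (by lia)⟩
    simpa only [List.getElem_append_left hi] using h i (by lia)
  · rintro ⟨hα, ha⟩ i hi
    obtain hi | rfl := Nat.lt_succ_iff_lt_or_eq.1 hi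
    · simpa only [List.getElem_append_left hi] using hα i hi
    · simpa only [List.getElem_concat_length] using ha

theorem ZH_eq_Z_inter_preimage_blurNhd (α : List A) (H : {H : Set A // H ∈ V}) (F : Set A) :
    ZH A V α H F = Z A V α ∩ (fun x => x.1 α.length) ⁻¹' blurNhd H F :=
  rfl

theorem isOpen_Z (α : List A) : IsOpen (Z A V α) :=
  TopologicalSpace.isOpen_generateFrom_of_mem (Or.inl ⟨α, rfl⟩)

theorem isOpen_ZH (α : List A) (H : {H : Set A // H ∈ V}) {F : Set A} (hFH : F ⊆ H.1)
    (hF : F.Finite) : IsOpen (ZH A V α H F) :=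
  TopologicalSpace.isOpen_generateFrom_of_mem (Or.inr ⟨α, H, F, hFH, hF, rfl⟩)

theorem continuousOn_apply_length (α : List A) :
    ContinuousOn (fun x : FullBlur A V => x.1 α.length) (Z A V α) := by
  refine continuousOn_iff.2 fun x hx T hT hxT => ?_
  rcases hs : x.1 α.length with a | H
  · refine ⟨Z A V (α ++ [a]), isOpen_Z _, ?_, ?_⟩
    · rw [Z_append_singleton]
      exact ⟨hx, hs⟩
    · rw [Z_append_singleton]
      rintro z ⟨⟨-, hz : z.1 α.length = Sum.inl a⟩, -⟩
      rwa [mem_preimage, hz, ← hs]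
  · rw [hs] at hxT
    refine ⟨ZH A V α H (H.1 \ Sum.inl ⁻¹' T), isOpen_ZH α H sdiff_subset (hT H hxT),
      ⟨hx, Or.inl hs⟩, ?_⟩
    rintro z ⟨⟨-, hz | ⟨a, ⟨haH, ha⟩, hz⟩⟩, -⟩
    · rwa [mem_preimage, hz]
    · rw [mem_preimage, hz]
      by_contra haT
      exact ha ⟨haH, haT⟩

theorem isClopen_Z (α : List A) : IsClopen (Z A V α) := by
  induction α using List.reverseRecOn with
  | nil =>
    convert isClopen_univ
    simp [Z]
  | append_singleton α a ih =>
    rw [Z_append_singleton]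
    exact (continuousOn_apply_length α).preimage_isClopen_of_isClopen ih (isClopen_singleton_inl a)

theorem isClopen_ZH (hV : V.Pairwise fun G H => (G ∩ H).Finite) (α : List A)
    (H : {H : Set A // H ∈ V}) {F : Set A} (hF : F.Finite) : IsClopen (ZH A V α H F) := by
  rw [ZH_eq_Z_inter_preimage_blurNhd]
  exact (continuousOn_apply_length α).preimage_isClopen_of_isClopen (isClopen_Z α)
    ⟨isClosed_blurNhd hV H F, isOpen_blurNhd H hF⟩

theorem isClopen_of_mem_Cylinders (hV : V.Pairwise fun G H => (G ∩ H).Finite)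
    {U : Set (FullBlur A V)} (hU : U ∈ Cylinders A V) : IsClopen U := by
  obtain ⟨α, rfl⟩ | ⟨α, H, F, -, hF, rfl⟩ := hU
  · exact isClopen_Z α
  · exact isClopen_ZH hV α H hF

end

theorem regular_fullBlur_general {A : Type*} {V : Set (Set A)}
    (hV : V.Pairwise fun G H => (G ∩ H).Finite) : @RegularSpace (FullBlur A V) (tau A V) :=
  let := tau A V
  regularSpace_of_generateFrom_isClopen rfl fun _ => isClopen_of_mem_Cylinders hV

/-- The full blur shift, with the topology generated by the
generalized cylinders, is regular: every closed set `C` and point `y ∉ C` can be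
separated by disjoint open sets. -/
theorem regular_fullBlur {A : Type*} (V : Set (Set A)) (hV : IsBlurFamily V) :
    ∀ C : Set (FullBlur A V), @IsClosed _ (tau A V) C →
      ∀ y : FullBlur A V, y ∉ C →
        ∃ U W : Set (FullBlur A V), @IsOpen _ (tau A V) U ∧ @IsOpen _ (tau A V) W ∧
          y ∈ U ∧ C ⊆ W ∧ Disjoint U W := by
  intro C hC y hy
  let := tau A V
  have := regular_fullBlur_general fun G hG H hH => hV.2 G hG H hH
  obtain ⟨U, ⟨hyU, hU⟩, W, ⟨hW, hCW⟩, hUW⟩ :=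
    ((nhds_basis_opens y).disjoint_iff (hasBasis_nhdsSet C)).1 (RegularSpace.regular hC hy).symm
  exact ⟨U, W, hU, hW, hyU, hCW, hUW⟩

end BlurPaper
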